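/- Let C₅ = ⟨(x+1)^a + u(x+1)^{t₁} h₁(x) + u²(x+1)^{t₂} h₂(x)⟩ be a Type 5 ideal of 𝓡, where 1 ≤ a ≤ 2^s − 1, h₁ and h₂ are each either 0 or a unit of 𝓚, 0 ≤ t₁ < U with U = a if h₁ = 0 and U = min{a, 2^s − a + t₁} if h₁ ≠ 0, and 0 ≤ t₂ < V, where V = min{k ≥ 0 : u²(x+1)^k ∈ C₅}. Then V equals: (1) a, if h₁ = 0 and h₂ = 0; (2) min{a, 2^s − a + t₂}, if h₁ = 0 and h₂ ≠ 0; (3) min{a, 2^s − 2a + 2t₁}, if h₁ ≠ 0, h₂ = 0 and a ≤ 2^s − a + t₁; (4) min{a, 2^s − a + t₂, 2^s − 2a + 2t₁}, if h₁ ≠ 0, h₂ ≠ 0, a ≤ 2^s − a + t₁ and 2t₁ ≠ a + t₂; (5) min{a, 2^s − a + t₂ + α₁}, if h₁ ≠ 0, h₂ ≠ 0, a ≤ 2^s − a + t₁ and 2t₁ = a + t₂; (6) t₁, if h₁ ≠ 0, h₂ = 0 and a ≥ 2^s − a + t₁; (7) min{t₁, a + t₂ − t₁}, if h₁ ≠ 0,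 h₂ ≠ 0, a ≥ 2^s − a + t₁ and 2t₁ ≠ a + t₂; (8) min{2^s + t₁ − a, t₁ + α₁}, if h₁ ≠ 0, h₂ ≠ 0, a ≥ 2^s − a + t₁ and 2t₁ = a + t₂; where α₁ = max{0 ≤ k ≤ 2^s : (x+1)^k divides h₁(x) − h₂(x) h₁(x)^{-1} in 𝓚}. -/

import Mathlib

noncomputable section

open Polynomial

/-- The finite field `GF(2^m)`. -/
abbrev Fq (m : ℕ) : Type := GaloisField 2 m

/-- The ring `R₃ = F[u]/⟨u³⟩`. -/
abbrev R3 (m : ℕ) : Type := AdjoinRoot (X ^ 3 : (Fq m)[X])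

/-- The polynomial `x^{2^s} + 1` over `R₃`. -/
abbrev gR (m s : ℕ) : (R3 m)[X] := X ^ (2 ^ s) + 1

/-- The polynomial `x^{2^s} + 1` over `F`. -/
abbrev gK (m s : ℕ) : (Fq m)[X] := X ^ (2 ^ s) + 1

/-- The ring `𝓡 = R₃[x]/⟨x^{2^s}+1⟩`. -/
abbrev RR (m s : ℕ) : Type := AdjoinRoot (gR m s)

/-- The ring `𝓚 = F[x]/⟨x^{2^s}+1⟩`. -/
abbrev KK (m s : ℕ) : Type := AdjoinRoot (gK m s)

/-- The element `u` of `R₃`. -/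
def uu (m : ℕ) : R3 m := AdjoinRoot.root _

/-- The element `u` of `𝓡`. -/
def uR (m s : ℕ) : RR m s := algebraMap (R3 m) (RR m s) (uu m)

/-- The element `x` of `𝓡`. -/
def xR (m s : ℕ) : RR m s := AdjoinRoot.root _

/-- The element `x` of `𝓚`. -/
def xK (m s : ℕ) : KK m s := AdjoinRoot.root _

lemma gR_monic (m s : ℕ) : (gR m s).Monic := by
  have h : (gR m s) = X ^ (2 ^ s) + C 1 := by simp [gR]
  rw [h]; exact monic_X_pow_add_C _ (by positivity)

lemma gK_monic (m s : ℕ) : (gK m s).Monic := by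
  have h : (gK m s) = X ^ (2 ^ s) + C 1 := by simp [gK]
  rw [h]; exact monic_X_pow_add_C _ (by positivity)

/-- The standard representative (of degree `< 2^s`) of an element of `𝓡`. -/
def repR (m s : ℕ) (c : RR m s) : (R3 m)[X] := AdjoinRoot.modByMonicHom (gR_monic m s) c

/-- The standard representative (of degree `< 2^s`) of an element of `𝓚`. -/
def repK (m s : ℕ) (c : KK m s) : (Fq m)[X] := AdjoinRoot.modByMonicHom (gK_monic m s) c

/-- The `j`-th coefficient of the standard representative of `c ∈ 𝓡`. -/
def coeffR (m s : ℕ) (c : RR m s) (j : ℕ) : R3 m := (repR m s c).coeff j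

/-- The dot product on `𝓡`. -/
def dotR (m s : ℕ) (c d : RR m s) : R3 m :=
  ∑ j ∈ Finset.range (2 ^ s), coeffR m s c j * coeffR m s d j

/-- The dual of a set of codewords. -/
def dualSet (m s : ℕ) (S : Set (RR m s)) : Set (RR m s) :=
  {c | ∀ d ∈ S, dotR m s c d = 0}

/-- A cyclic code (ideal of `𝓡`) is self-dual if it coincides with its dual. -/
def IsSelfDual (m s : ℕ) (C : Ideal (RR m s)) : Prop :=
  (C : Set (RR m s)) = dualSet m s (C : Set (RR m s))

/-- The annihilator of a set of codewords. -/
def annSet (m s : ℕ) (S : Set (RR m s)) : Set (RR m s) :=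
  {c | ∀ d ∈ S, c * d = 0}

/-- The reciprocal `c*(x) = x^{deg c} c(x⁻¹)` of an element of `𝓡`. -/
def recip (m s : ℕ) (c : RR m s) : RR m s :=
  xR m s ^ (repR m s c).natDegree *
    Polynomial.aeval (Ring.inverse (xR m s)) (repR m s c)

/-- Reduction `R₃ → F` modulo `u`. -/
def epsR3 (m : ℕ) : R3 m →+* Fq m :=
  AdjoinRoot.lift (RingHom.id (Fq m)) 0 (by simp)

lemma xK_pow_add_one (m s : ℕ) : (xK m s) ^ (2 ^ s) + 1 = 0 := by
  have h := AdjoinRoot.eval₂_root (gK m s)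
  simpa [gK, xK] using h

lemma xR_pow_add_one (m s : ℕ) : (xR m s) ^ (2 ^ s) + 1 = 0 := by
  have h := AdjoinRoot.eval₂_root (gR m s)
  simpa [gR, xR] using h

/-- Reduction `μ : 𝓡 → 𝓚` modulo `u`. -/
def muRK (m s : ℕ) : RR m s →+* KK m s :=
  AdjoinRoot.lift ((algebraMap (Fq m) (KK m s)).comp (epsR3 m)) (xK m s) (by
    simp only [gR, eval₂_add, eval₂_pow, eval₂_X, eval₂_one]
    exact xK_pow_add_one m s)

/-- The natural inclusion `𝓚 → 𝓡`. -/
def KtoR (m s : ℕ) : KK m s →+* RR m s :=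
  AdjoinRoot.lift ((algebraMap (R3 m) (RR m s)).comp (algebraMap (Fq m) (R3 m))) (xR m s) (by
    simp only [gK, eval₂_add, eval₂_pow, eval₂_X, eval₂_one]
    exact xR_pow_add_one m s)

/-- The `i`-th torsion code of a set `S ⊆ 𝓡`. -/
def TorSet (m s : ℕ) (S : Set (RR m s)) (i : ℕ) : Set (KK m s) :=
  muRK m s '' {f | (uR m s) ^ i * f ∈ S}

/-- The torsion degree `T_i`: the (unique) `k` with `Tor_i = ⟨(x+1)^k⟩`. -/
def Tdeg (m s : ℕ) (S : Set (RR m s)) (i : ℕ) : ℕ :=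
  sInf {k | TorSet m s S i =
    ((Ideal.span {(xK m s + 1) ^ k} : Ideal (KK m s)) : Set (KK m s))}

/-- Substitution `h(x) ↦ h(x⁻¹)` on `𝓚`. -/
def invSub (m s : ℕ) (h : KK m s) : KK m s :=
  Polynomial.aeval (Ring.inverse (xK m s)) (repK m s h)


/-!
Put `y = x + 1`. Then `𝓡 = 𝓚[u]/⟨u³⟩`, and `𝓚` is a chain ring whose ideals are the `⟨y ^ k⟩`.
Comparing coefficients of powers of `u`, the `c` with `u² c ∈ ⟨g₀ + u g₁ + u² g₂⟩` are the
`f₀ g₂ + f₁ g₁ + f₂ g₀` for which `f₀ g₀ = 0` and `f₀ g₁ + f₁ g₀ = 0`.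

* If `ann g₀ = ⟨b⟩` and `b g₁ = e g₀`, the pairs `(f₀, f₁)` are generated by `(b, -e)` and `(0, b)`,
  so the `c` form the ideal `⟨g₀, b g₂ - e g₁⟩`.
* If `ann g₁ = ⟨b⟩`, `g₀ = d g₁` and `d g₀ = 0`, they are generated by `(-d, 1)` and `(b, 0)`,
  so the `c` form the ideal `⟨g₁ - d g₂, b g₂⟩`.

For `g₀ = y ^ a` and `g₁ = y ^ t₁ h₁` these are the cases `a ≤ 2 ^ s - a + t₁` and
`a ≥ 2 ^ s - a + t₁`. In both, one generator is a difference of two terms of known order, and these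
orders agree exactly when `2 t₁ = a + t₂`; then that generator is, up to a unit, a power of `y`
times `h₁ - h₂ h₁⁻¹`.
-/

/-! ### Chain rings -/

/-- `y` is a uniformizer of the chain ring `K` of length `N`: every non-unit is a multiple of `y`,
and `y` is nilpotent of index exactly `N` (`N = 0` being the case of the zero ring). -/
structure IsNilpotentUniformizer {K : Type*} [CommRing K] (y : K) (N : ℕ) : Prop where
  isUnit_or_dvd : ∀ c : K, IsUnit c ∨ y ∣ c
  pow_eq_zero_iff : ∀ n : ℕ, y ^ n = 0 ↔ N ≤ n

namespace IsNilpotentUniformizer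

variable {K : Type*} [CommRing K] {y : K} {N : ℕ}

lemma of_irreducible {A : Type*} [CommRing A] [IsDomain A] [IsPrincipalIdealRing A] {p q : A}
    (hp : Irreducible p) (hq : q = p ^ N) :
    IsNilpotentUniformizer (Ideal.Quotient.mk (Ideal.span {q}) p) N where
  isUnit_or_dvd := by
    intro c
    obtain ⟨b, rfl⟩ := Ideal.Quotient.mk_surjective c
    refine (em (p ∣ b)).symm.imp (fun h ↦ ?_) (map_dvd _)
    obtain ⟨r, t, hrt⟩ : IsCoprime q b := hq ▸ (hp.coprime_iff_not_dvd.2 h).pow_left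
    refine IsUnit.of_mul_eq_one_right (Ideal.Quotient.mk _ t) ?_
    have hq0 : Ideal.Quotient.mk (Ideal.span {q}) q = 0 :=
      (Ideal.Quotient.eq_zero_iff_dvd _ _).2 dvd_rfl
    simpa only [map_add, map_mul, hq0, mul_zero, zero_add, map_one]
      using congrArg (Ideal.Quotient.mk (Ideal.span {q})) hrt
  pow_eq_zero_iff n := by
    rw [← map_pow, Ideal.Quotient.eq_zero_iff_dvd, hq,
      pow_dvd_pow_iff hp.ne_zero hp.not_isUnit]

lemma span_eq_span_pow_sSup (hy : IsNilpotentUniformizer y N) (d : K) :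
    Ideal.span {d} = Ideal.span {y ^ sSup {k : ℕ | k ≤ N ∧ y ^ k ∣ d}} := by
  set S := {k : ℕ | k ≤ N ∧ y ^ k ∣ d}
  have hbdd : BddAbove S := ⟨N, fun _ hk ↦ hk.1⟩
  obtain ⟨-, w, hw⟩ : sSup S ∈ S := Nat.sSup_mem ⟨0, Nat.zero_le N, by simp⟩ hbdd
  rcases hy.isUnit_or_dvd w with hunit | ⟨z, rfl⟩
  · rw [hw, Ideal.span_singleton_mul_right_unit hunit]
  · have hdvd : y ^ (sSup S + 1) ∣ d := ⟨z, by rw [hw]; ring⟩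
    have hN : N ≤ sSup S := by
      by_contra! hlt
      exact (le_csSup hbdd ⟨hlt, hdvd⟩).not_gt (Nat.lt_succ_self _)
    rw [hw, (hy.pow_eq_zero_iff _).2 hN, zero_mul]

lemma mul_pow_eq_zero_iff (hy : IsNilpotentUniformizer y N) {i : ℕ} (hi : i ≤ N) {c : K} :
    c * y ^ i = 0 ↔ y ^ (N - i) ∣ c := by
  constructor
  · intro h
    have hspan := hy.span_eq_span_pow_sSup c
    set k := sSup {k : ℕ | k ≤ N ∧ y ^ k ∣ c}
    have hck : y ^ k ∣ c := Ideal.span_singleton_le_span_singleton.1 hspan.le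
    obtain ⟨b, hb⟩ : c ∣ y ^ k := Ideal.span_singleton_le_span_singleton.1 hspan.ge
    have hk : y ^ (k + i) = 0 := by rw [pow_add, hb, mul_right_comm, h, zero_mul]
    have := (hy.pow_eq_zero_iff _).1 hk
    exact (pow_dvd_pow y (by omega)).trans hck
  · rintro ⟨b, rfl⟩
    rw [mul_right_comm, ← pow_add, Nat.sub_add_cancel hi, (hy.pow_eq_zero_iff N).2 le_rfl,
      zero_mul]

lemma pow_dvd_pow_iff (hy : IsNilpotentUniformizer y N) {i j : ℕ} (hi : i ≤ N) :
    y ^ i ∣ y ^ j ↔ i ≤ j := by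
  refine ⟨fun h ↦ ?_, pow_dvd_pow y⟩
  have hzero : y ^ j * y ^ (N - i) = 0 := by
    rw [hy.mul_pow_eq_zero_iff (Nat.sub_le N i), Nat.sub_sub_self hi]
    exact h
  rw [← pow_add, hy.pow_eq_zero_iff] at hzero
  omega

lemma sInf_pow_mem_span_pow (hy : IsNilpotentUniformizer y N) {M : ℕ} (hM : M ≤ N) :
    sInf {k : ℕ | y ^ k ∈ Ideal.span {y ^ M}} = M := by
  simp only [Ideal.mem_span_singleton, hy.pow_dvd_pow_iff hM]
  exact csInf_Ici

lemma isUnit_add_pow_mul (hy : IsNilpotentUniformizer y N) {w : K} (hw : IsUnit w) (z : K) {i : ℕ}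
    (hi : i ≠ 0) : IsUnit (w + y ^ i * z) := by
  have hnil : IsNilpotent y := ⟨N, (hy.pow_eq_zero_iff N).2 le_rfl⟩
  exact ((Commute.all _ z).isNilpotent_mul_right (hnil.pow_of_pos hi)).isUnit_add_left_of_commute
    hw (Commute.all _ _)

lemma span_pow_mul_add_pow_mul (hy : IsNilpotentUniformizer y N) {w z : K} (hw : IsUnit w)
    (hz : IsUnit z) {i j : ℕ} (hij : i ≠ j) :
    Ideal.span {y ^ i * w + y ^ j * z} = Ideal.span {y ^ min i j} := by
  wlog hlt : i < j generalizing i j w z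
  · rw [add_comm, min_comm, this hz hw hij.symm (by omega)]
  have hfactor : y ^ i * w + y ^ j * z = y ^ i * (w + y ^ (j - i) * z) := by
    rw [mul_add, ← mul_assoc, ← pow_add, Nat.add_sub_cancel' hlt.le]
  rw [hfactor, Ideal.span_singleton_mul_right_unit (hy.isUnit_add_pow_mul hw z (by omega)),
    min_eq_left hlt.le]

end IsNilpotentUniformizer

lemma span_pair_eq_span_pow_min {K : Type*} [CommSemiring K] {y p q : K} {i j : ℕ}
    (hp : Ideal.span {p} = Ideal.span {y ^ i}) (hq : Ideal.span {q} = Ideal.span {y ^ j}) :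
    Ideal.span {p, q} = Ideal.span {y ^ min i j} := by
  rw [Ideal.span_insert, hp, hq]
  rcases le_total i j with h | h
  · rw [min_eq_left h, sup_eq_left]
    exact Ideal.span_singleton_le_span_singleton.2 (pow_dvd_pow y h)
  · rw [min_eq_right h, sup_eq_right]
    exact Ideal.span_singleton_le_span_singleton.2 (pow_dvd_pow y h)

/-! ### The top torsion ideal of a principal ideal of `K[u]/⟨u³⟩` -/

section TopTorsion

variable {K : Type*} [CommRing K]

/-- The second torsion code of the ideal `⟨g₀ + u g₁ + u² g₂⟩` of `K[u]/⟨u³⟩`: the `c : K` with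
`u² c` in this ideal. It is written out by comparing the coefficients of `1`, `u` and `u²` in
`(f₀ + u f₁ + u² f₂) (g₀ + u g₁ + u² g₂) = u² c`. -/
def topTorsion (g₀ g₁ g₂ : K) : Ideal K where
  carrier := {c | ∃ f₀ f₁ f₂, f₀ * g₀ = 0 ∧ f₀ * g₁ + f₁ * g₀ = 0 ∧
    f₀ * g₂ + f₁ * g₁ + f₂ * g₀ = c}
  zero_mem' := ⟨0, 0, 0, by simp⟩
  add_mem' := by
    rintro _ _ ⟨f₀, f₁, f₂, h₀, h₁, rfl⟩ ⟨f₀', f₁', f₂', h₀', h₁', rfl⟩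
    refine ⟨f₀ + f₀', f₁ + f₁', f₂ + f₂', ?_, ?_, by ring⟩
    · linear_combination h₀ + h₀'
    · linear_combination h₁ + h₁'
  smul_mem' := by
    rintro r _ ⟨f₀, f₁, f₂, h₀, h₁, rfl⟩
    refine ⟨r * f₀, r * f₁, r * f₂, ?_, ?_, by rw [smul_eq_mul]; ring⟩
    · linear_combination r * h₀
    · linear_combination r * h₁

lemma root_sq_mul_algebraMap_mem_span_iff {R : Type*} [CommRing R] [Algebra K R]
    (hR : IsAdjoinRoot R (X ^ 3 : K[X])) {g₀ g₁ g₂ c : K} :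
    hR.root ^ 2 * algebraMap K R c ∈ Ideal.span {algebraMap K R g₀ + hR.root * algebraMap K R g₁ +
      hR.root ^ 2 * algebraMap K R g₂} ↔ c ∈ topTorsion g₀ g₁ g₂ := by
  have hmap (p : K[X]) : hR.map p * (algebraMap K R g₀ + hR.root * algebraMap K R g₁ +
      hR.root ^ 2 * algebraMap K R g₂) = hR.root ^ 2 * algebraMap K R c ↔
      X ^ 3 ∣ X ^ 2 * (p * C g₂) + X ^ 1 * (p * C g₁) + p * C g₀ - X ^ 2 * C c := by
    rw [← hR.map_eq_zero_iff, map_sub, sub_eq_zero]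
    simp only [map_add, map_mul, map_pow, hR.map_X, ← hR.algebraMap_apply]
    ring_nf
  have hcoeff (p : K[X]) :
      X ^ 3 ∣ X ^ 2 * (p * C g₂) + X ^ 1 * (p * C g₁) + p * C g₀ - X ^ 2 * C c ↔
      p.coeff 0 * g₀ = 0 ∧ p.coeff 0 * g₁ + p.coeff 1 * g₀ = 0 ∧
        p.coeff 0 * g₂ + p.coeff 1 * g₁ + p.coeff 2 * g₀ = c := by
    simp only [X_pow_dvd_iff, Nat.forall_lt_succ_right, coeff_sub, coeff_add, coeff_X_pow_mul',
      coeff_mul_C]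
    simp [and_assoc, sub_eq_zero]
  rw [Ideal.mem_span_singleton']
  constructor
  · rintro ⟨r, hr⟩
    obtain ⟨p, rfl⟩ := hR.map_surjective r
    exact ⟨p.coeff 0, p.coeff 1, p.coeff 2, (hcoeff p).1 ((hmap p).1 hr)⟩
  · rintro ⟨f₀, f₁, f₂, h⟩
    refine ⟨hR.map (C f₀ + C f₁ * X + C f₂ * X ^ 2), (hmap _).2 ((hcoeff _).2 ?_)⟩
    simpa [coeff_X, coeff_X_pow, coeff_C] using h

lemma topTorsion_eq_span_of_mul_eq_mul {g₀ g₁ b e : K} (g₂ : K)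
    (hb : ∀ f, f * g₀ = 0 ↔ b ∣ f) (hbe : b * g₁ = e * g₀) :
    topTorsion g₀ g₁ g₂ = Ideal.span {g₀, b * g₂ - e * g₁} := by
  have hb₀ : b * g₀ = 0 := (hb b).2 dvd_rfl
  apply le_antisymm
  · rintro _ ⟨f₀, f₁, f₂, h₀, h₁, rfl⟩
    obtain ⟨p, rfl⟩ := (hb f₀).1 h₀
    obtain ⟨q, hq⟩ := (hb (p * e + f₁)).1 (by linear_combination h₁ - p * hbe)
    refine Ideal.mem_span_pair.2 ⟨f₂ + q * e, p, ?_⟩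
    linear_combination - g₁ * hq - q * hbe
  · rw [Ideal.span_le, Set.pair_subset_iff]
    refine ⟨⟨0, 0, 1, by ring, by ring, by ring⟩, ⟨b, -e, 0, hb₀, ?_, by ring⟩⟩
    linear_combination hbe

lemma topTorsion_eq_span_of_eq_mul {g₀ g₁ b d : K} (g₂ : K)
    (hb : ∀ f, f * g₁ = 0 ↔ b ∣ f) (hd : g₀ = d * g₁) (hd₀ : d * g₀ = 0) :
    topTorsion g₀ g₁ g₂ = Ideal.span {g₁ - d * g₂, b * g₂} := by
  have hb₁ : b * g₁ = 0 := (hb b).2 dvd_rfl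
  apply le_antisymm
  · rintro _ ⟨f₀, f₁, f₂, -, h₁, rfl⟩
    obtain ⟨p, hp⟩ := (hb (f₀ + f₁ * d)).1 (by linear_combination h₁ - f₁ * hd)
    obtain ⟨q, hq⟩ := (hb (d * d)).1 (by linear_combination hd₀ - d * hd)
    refine Ideal.mem_span_pair.2 ⟨f₁ + f₂ * d, p + f₂ * q, ?_⟩
    linear_combination - g₂ * hp - f₂ * g₂ * hq - f₂ * hd
  · rw [Ideal.span_le, Set.pair_subset_iff]
    refine ⟨⟨-d, 1, 0, ?_, ?_, by ring⟩, ⟨b, 0, 0, ?_, ?_, by ring⟩⟩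
    · linear_combination -hd₀
    · linear_combination hd
    · linear_combination b * hd + d * hb₁
    · linear_combination hb₁

end TopTorsion

namespace IsNilpotentUniformizer

variable {K : Type*} [CommRing K] {y : K} {N a t₁ t₂ : ℕ} {h₁ h₂ : K}

lemma topTorsion_zero (hy : IsNilpotentUniformizer y N) (ha : a ≤ N) (h₂ : K) :
    topTorsion (y ^ a) 0 (y ^ t₂ * h₂) = Ideal.span {y ^ a, y ^ (N + t₂ - a) * h₂} := by
  rw [topTorsion_eq_span_of_mul_eq_mul (e := 0) _ (fun _ ↦ hy.mul_pow_eq_zero_iff ha) (by ring),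
    show N + t₂ - a = (N - a) + t₂ by omega]
  ring_nf

lemma topTorsion_of_two_mul_le (hy : IsNilpotentUniformizer y N) (ha : a ≤ N)
    (hle : 2 * a ≤ N + t₁) (h₁ h₂ : K) :
    topTorsion (y ^ a) (y ^ t₁ * h₁) (y ^ t₂ * h₂) =
      Ideal.span {y ^ a, y ^ (N + t₂ - a) * h₂ - y ^ (N + 2 * t₁ - 2 * a) * h₁ ^ 2} := by
  have hbe : y ^ (N - a) * (y ^ t₁ * h₁) = y ^ (N + t₁ - 2 * a) * h₁ * y ^ a := by
    rw [← mul_assoc, ← pow_add, mul_right_comm, ← pow_add]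
    congr 2
    omega
  rw [topTorsion_eq_span_of_mul_eq_mul _ (fun _ ↦ hy.mul_pow_eq_zero_iff ha) hbe,
    show N + t₂ - a = (N - a) + t₂ by omega,
    show N + 2 * t₁ - 2 * a = (N + t₁ - 2 * a) + t₁ by omega]
  ring_nf

lemma topTorsion_of_le_two_mul (hy : IsNilpotentUniformizer y N) (ha : a ≤ N)
    (hle : N + t₁ ≤ 2 * a) (hh₁ : IsUnit h₁) (h₂ : K) :
    topTorsion (y ^ a) (y ^ t₁ * h₁) (y ^ t₂ * h₂) =
      Ideal.span {y ^ t₁ * h₁ - y ^ (a + t₂ - t₁) * (h₂ * Ring.inverse h₁),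
        y ^ (N + t₂ - t₁) * h₂} := by
  have hinv : Ring.inverse h₁ * h₁ = 1 := Ring.inverse_mul_cancel h₁ hh₁
  have hb (f : K) : f * (y ^ t₁ * h₁) = 0 ↔ y ^ (N - t₁) ∣ f := by
    rw [← mul_assoc, hh₁.mul_left_eq_zero, hy.mul_pow_eq_zero_iff (by omega)]
  have hd : y ^ a = y ^ (a - t₁) * Ring.inverse h₁ * (y ^ t₁ * h₁) := by
    rw [mul_mul_mul_comm, hinv, mul_one, ← pow_add, Nat.sub_add_cancel (by omega)]
  have hd₀ : y ^ (a - t₁) * Ring.inverse h₁ * y ^ a = 0 := by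
    rw [mul_right_comm, ← pow_add, (hy.pow_eq_zero_iff _).2 (by omega), zero_mul]
  rw [topTorsion_eq_span_of_eq_mul _ hb hd hd₀,
    show a + t₂ - t₁ = (a - t₁) + t₂ by omega, show N + t₂ - t₁ = (N - t₁) + t₂ by omega]
  ring_nf

lemma topTorsion_zero_zero (hy : IsNilpotentUniformizer y N) (ha : a ≤ N) :
    topTorsion (y ^ a) 0 0 = Ideal.span {y ^ a} := by
  simpa [Set.pair_comm _ (0 : K)] using hy.topTorsion_zero (t₂ := 0) ha 0

lemma topTorsion_zero_unit (hy : IsNilpotentUniformizer y N) (ha : a ≤ N) (hh₂ : IsUnit h₂) :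
    topTorsion (y ^ a) 0 (y ^ t₂ * h₂) = Ideal.span {y ^ min a (N + t₂ - a)} := by
  rw [hy.topTorsion_zero ha]
  exact span_pair_eq_span_pow_min rfl (Ideal.span_singleton_mul_right_unit hh₂ _)

lemma topTorsion_unit_zero_of_two_mul_le (hy : IsNilpotentUniformizer y N) (ha : a ≤ N)
    (hle : 2 * a ≤ N + t₁) (hh₁ : IsUnit h₁) :
    topTorsion (y ^ a) (y ^ t₁ * h₁) 0 = Ideal.span {y ^ min a (N + 2 * t₁ - 2 * a)} := by
  have htor := hy.topTorsion_of_two_mul_le (t₂ := 0) ha hle h₁ 0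
  rw [mul_zero, mul_zero, zero_sub, ← mul_neg] at htor
  rw [htor]
  exact span_pair_eq_span_pow_min rfl (Ideal.span_singleton_mul_right_unit (hh₁.pow 2).neg _)

lemma topTorsion_unit_unit_of_two_mul_le_of_ne (hy : IsNilpotentUniformizer y N) (ha : a ≤ N)
    (hle : 2 * a ≤ N + t₁) (hne : 2 * t₁ ≠ a + t₂) (hh₁ : IsUnit h₁) (hh₂ : IsUnit h₂) :
    topTorsion (y ^ a) (y ^ t₁ * h₁) (y ^ t₂ * h₂) =
      Ideal.span {y ^ min a (min (N + t₂ - a) (N + 2 * t₁ - 2 * a))} := by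
  rw [hy.topTorsion_of_two_mul_le ha hle, sub_eq_add_neg, ← mul_neg]
  exact span_pair_eq_span_pow_min rfl
    (hy.span_pow_mul_add_pow_mul hh₂ (hh₁.pow 2).neg (by omega))

lemma topTorsion_unit_unit_of_two_mul_le_of_eq (hy : IsNilpotentUniformizer y N) (ha : a ≤ N)
    (hle : 2 * a ≤ N + t₁) (heq : 2 * t₁ = a + t₂) (hh₁ : IsUnit h₁) {α : ℕ}
    (hα : Ideal.span {h₁ - h₂ * Ring.inverse h₁} = Ideal.span {y ^ α}) :
    topTorsion (y ^ a) (y ^ t₁ * h₁) (y ^ t₂ * h₂) = Ideal.span {y ^ min a (N + t₂ + α - a)} := by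
  have hinv : Ring.inverse h₁ * h₁ = 1 := Ring.inverse_mul_cancel h₁ hh₁
  have hfactor : y ^ (N + t₂ - a) * h₂ - y ^ (N + 2 * t₁ - 2 * a) * h₁ ^ 2 =
      y ^ (N + t₂ - a) * (h₁ - h₂ * Ring.inverse h₁) * -h₁ := by
    rw [show N + 2 * t₁ - 2 * a = N + t₂ - a by omega]
    linear_combination -y ^ (N + t₂ - a) * h₂ * hinv
  rw [hy.topTorsion_of_two_mul_le ha hle, hfactor]
  refine span_pair_eq_span_pow_min rfl ?_
  rw [Ideal.span_singleton_mul_right_unit hh₁.neg, ← Ideal.span_singleton_mul_span_singleton, hα,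
    Ideal.span_singleton_mul_span_singleton, ← pow_add,
    show N + t₂ - a + α = N + t₂ + α - a by omega]

lemma topTorsion_unit_zero_of_le_two_mul (hy : IsNilpotentUniformizer y N) (ha : a ≤ N)
    (hle : N + t₁ ≤ 2 * a) (hh₁ : IsUnit h₁) :
    topTorsion (y ^ a) (y ^ t₁ * h₁) 0 = Ideal.span {y ^ t₁} := by
  have htor := hy.topTorsion_of_le_two_mul (t₂ := 0) ha hle hh₁ 0
  rw [← Ideal.span_singleton_mul_right_unit hh₁]
  simpa [Set.pair_comm _ (0 : K)] using htor

lemma topTorsion_unit_unit_of_le_two_mul_of_ne (hy : IsNilpotentUniformizer y N) (ha : a ≤ N)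
    (hle : N + t₁ ≤ 2 * a) (hne : 2 * t₁ ≠ a + t₂) (hh₁ : IsUnit h₁) (hh₂ : IsUnit h₂) :
    topTorsion (y ^ a) (y ^ t₁ * h₁) (y ^ t₂ * h₂) =
      Ideal.span {y ^ min t₁ (a + t₂ - t₁)} := by
  have hD := hy.span_pow_mul_add_pow_mul (i := t₁) (j := a + t₂ - t₁) hh₁
    (hh₂.mul hh₁.ringInverse).neg (by omega)
  rw [hy.topTorsion_of_le_two_mul ha hle hh₁, sub_eq_add_neg, ← mul_neg,
    span_pair_eq_span_pow_min hD (Ideal.span_singleton_mul_right_unit hh₂ _),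
    min_eq_left (by omega)]

lemma topTorsion_unit_unit_of_le_two_mul_of_eq (hy : IsNilpotentUniformizer y N) (ha : a ≤ N)
    (hle : N + t₁ ≤ 2 * a) (heq : 2 * t₁ = a + t₂) (hh₁ : IsUnit h₁) (hh₂ : IsUnit h₂) {α : ℕ}
    (hα : Ideal.span {h₁ - h₂ * Ring.inverse h₁} = Ideal.span {y ^ α}) :
    topTorsion (y ^ a) (y ^ t₁ * h₁) (y ^ t₂ * h₂) =
      Ideal.span {y ^ min (N + t₁ - a) (t₁ + α)} := by
  have hD : Ideal.span {y ^ t₁ * (h₁ - h₂ * Ring.inverse h₁)} = Ideal.span {y ^ (t₁ + α)} := by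
    rw [← Ideal.span_singleton_mul_span_singleton, hα, Ideal.span_singleton_mul_span_singleton,
      pow_add]
  rw [hy.topTorsion_of_le_two_mul ha hle hh₁, show a + t₂ - t₁ = t₁ by omega, ← mul_sub,
    show N + t₂ - t₁ = N + t₁ - a by omega,
    span_pair_eq_span_pow_min hD (Ideal.span_singleton_mul_right_unit hh₂ _), min_comm]

end IsNilpotentUniformizer

theorem stmt15_general {K R : Type*} [CommRing K] [CommRing R] [Algebra K R]
    {y : K} {N : ℕ} (hy : IsNilpotentUniformizer y N) (hR : IsAdjoinRoot R (X ^ 3 : K[X]))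
    (a t₁ t₂ : ℕ) (h₁ h₂ : K) (ha : a ≤ N)
    (hh₁ : h₁ = 0 ∨ IsUnit h₁) (hh₂ : h₂ = 0 ∨ IsUnit h₂)
    (C : Ideal R)
    (hC : C = Ideal.span
      {algebraMap K R y ^ a + hR.root * algebraMap K R y ^ t₁ * algebraMap K R h₁ +
        hR.root ^ 2 * algebraMap K R y ^ t₂ * algebraMap K R h₂})
    (V : ℕ) (hV : V = sInf {k : ℕ | hR.root ^ 2 * algebraMap K R y ^ k ∈ C})
    (α₁ : ℕ)
    (hα₁ : α₁ = sSup {k : ℕ | k ≤ N ∧ y ^ k ∣ (h₁ - h₂ * Ring.inverse h₁)}) :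
    (h₁ = 0 → h₂ = 0 → V = a) ∧
    (h₁ = 0 → h₂ ≠ 0 → V = min a (N + t₂ - a)) ∧
    (h₁ ≠ 0 → h₂ = 0 → 2 * a ≤ N + t₁ →
      V = min a (N + 2 * t₁ - 2 * a)) ∧
    (h₁ ≠ 0 → h₂ ≠ 0 → 2 * a ≤ N + t₁ → 2 * t₁ ≠ a + t₂ →
      V = min a (min (N + t₂ - a) (N + 2 * t₁ - 2 * a))) ∧
    (h₁ ≠ 0 → h₂ ≠ 0 → 2 * a ≤ N + t₁ → 2 * t₁ = a + t₂ →
      V = min a (N + t₂ + α₁ - a)) ∧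
    (h₁ ≠ 0 → h₂ = 0 → N + t₁ ≤ 2 * a → V = t₁) ∧
    (h₁ ≠ 0 → h₂ ≠ 0 → N + t₁ ≤ 2 * a → 2 * t₁ ≠ a + t₂ →
      V = min t₁ (a + t₂ - t₁)) ∧
    (h₁ ≠ 0 → h₂ ≠ 0 → N + t₁ ≤ 2 * a → 2 * t₁ = a + t₂ →
      V = min (N + t₁ - a) (t₁ + α₁)) := by
  have hα : Ideal.span {h₁ - h₂ * Ring.inverse h₁} = Ideal.span {y ^ α₁} :=
    hα₁ ▸ hy.span_eq_span_pow_sSup _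
  have hVeq {M : ℕ} (hM : M ≤ N)
      (htor : topTorsion (y ^ a) (y ^ t₁ * h₁) (y ^ t₂ * h₂) = Ideal.span {y ^ M}) : V = M := by
    rw [hV, hC, ← hy.sInf_pow_mem_span_pow hM, ← htor]
    simp only [← root_sq_mul_algebraMap_mem_span_iff hR, map_mul, map_pow, mul_assoc]
  have hu₁ : h₁ ≠ 0 → IsUnit h₁ := hh₁.resolve_left
  have hu₂ : h₂ ≠ 0 → IsUnit h₂ := hh₂.resolve_left
  refine ⟨fun z₁ z₂ ↦ hVeq ha ?_, fun z₁ z₂ ↦ hVeq (by omega) ?_,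
    fun z₁ z₂ hle ↦ hVeq (by omega) ?_, fun z₁ z₂ hle hne ↦ hVeq (by omega) ?_,
    fun z₁ _ hle heq ↦ hVeq (by omega) ?_, fun z₁ z₂ hle ↦ hVeq (by omega) ?_,
    fun z₁ z₂ hle hne ↦ hVeq (by omega) ?_, fun z₁ z₂ hle heq ↦ hVeq (by omega) ?_⟩
  · rw [z₁, z₂, mul_zero, mul_zero, hy.topTorsion_zero_zero ha]
  · rw [z₁, mul_zero, hy.topTorsion_zero_unit ha (hu₂ z₂)]
  · rw [z₂, mul_zero, hy.topTorsion_unit_zero_of_two_mul_le ha hle (hu₁ z₁)]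
  · exact hy.topTorsion_unit_unit_of_two_mul_le_of_ne ha hle hne (hu₁ z₁) (hu₂ z₂)
  · exact hy.topTorsion_unit_unit_of_two_mul_le_of_eq ha hle heq (hu₁ z₁) hα
  · rw [z₂, mul_zero, hy.topTorsion_unit_zero_of_le_two_mul ha hle (hu₁ z₁)]
  · exact hy.topTorsion_unit_unit_of_le_two_mul_of_ne ha hle hne (hu₁ z₁) (hu₂ z₂)
  · exact hy.topTorsion_unit_unit_of_le_two_mul_of_eq ha hle heq (hu₁ z₁) (hu₂ z₂) hα

/-! ### The rings `𝓚` and `𝓡` -/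

section Concrete

variable (m s : ℕ)

lemma isNilpotentUniformizer_xK_add_one : IsNilpotentUniformizer (xK m s + 1) (2 ^ s) := by
  have hirr : Irreducible (X + 1 : (Fq m)[X]) := by
    simpa using irreducible_X_sub_C (-1 : Fq m)
  have hpow : gK m s = (X + 1) ^ 2 ^ s := by rw [add_pow_char_pow, one_pow]
  have hmk : xK m s + 1 = AdjoinRoot.mk (gK m s) (X + 1) := by simp [xK]
  exact hmk ▸ .of_irreducible hirr hpow

/-- The `𝓚`-algebra structure on `𝓡` given by the inclusion `𝓚 → 𝓡`. -/
instance : Algebra (KK m s) (RR m s) := (KtoR m s).toAlgebra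

lemma KtoR_xK : KtoR m s (xK m s) = xR m s := AdjoinRoot.lift_root _

lemma uR_pow_three : uR m s ^ 3 = 0 := by
  rw [uR, ← map_pow, uu, ← AdjoinRoot.mk_X, ← map_pow, AdjoinRoot.mk_self, map_zero]

/-- The map `𝓡 → 𝓚[u]/⟨u³⟩` exchanging the order in which `u` and `x` are adjoined to `F`. -/
def swapHom : RR m s →+* AdjoinRoot (X ^ 3 : (KK m s)[X]) :=
  AdjoinRoot.lift
    (AdjoinRoot.map (algebraMap (Fq m) (KK m s)) (X ^ 3) (X ^ 3) (by simp))
    (AdjoinRoot.of _ (xK m s)) (by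
      simp only [eval₂_add, eval₂_pow, eval₂_X, eval₂_one]
      rw [← map_pow, ← map_one (AdjoinRoot.of _), ← map_add, xK_pow_add_one, map_zero])

lemma swapHom_xR : swapHom m s (xR m s) = AdjoinRoot.of _ (xK m s) := AdjoinRoot.lift_root _

lemma swapHom_uR : swapHom m s (uR m s) = AdjoinRoot.root _ :=
  (AdjoinRoot.lift_of _).trans (AdjoinRoot.map_root ..)

lemma swapHom_KtoR (c : KK m s) : swapHom m s (KtoR m s c) = AdjoinRoot.of _ c := by
  suffices (swapHom m s).comp (KtoR m s) = AdjoinRoot.of _ from RingHom.congr_fun this c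
  refine AdjoinRoot.ringHom_ext (RingHom.ext fun z ↦ ?_) ?_
  · simp only [swapHom, KtoR, AdjoinRoot.algebraMap_eq, RingHom.comp_apply, AdjoinRoot.lift_of,
      AdjoinRoot.map_of]
  · exact (congrArg _ (KtoR_xK m s)).trans (swapHom_xR m s)

/-- The map `𝓚[u]/⟨u³⟩ → 𝓡`, inverse to `swapHom`. -/
def unswapHom : AdjoinRoot (X ^ 3 : (KK m s)[X]) →ₐ[KK m s] RR m s :=
  AdjoinRoot.liftAlgHom _ (Algebra.ofId _ _) (uR m s) (by simp [uR_pow_three])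

lemma unswapHom_of (c : KK m s) : unswapHom m s (AdjoinRoot.of _ c) = KtoR m s c :=
  AdjoinRoot.liftAlgHom_of ..

lemma unswapHom_root : unswapHom m s (AdjoinRoot.root _) = uR m s :=
  AdjoinRoot.liftAlgHom_root ..

lemma unswapHom_swapHom (c : RR m s) : unswapHom m s (swapHom m s c) = c := by
  suffices (unswapHom m s : _ →+* RR m s).comp (swapHom m s) = RingHom.id _ from
    RingHom.congr_fun this c
  refine AdjoinRoot.ringHom_ext (AdjoinRoot.ringHom_ext (RingHom.ext fun z ↦ ?_) ?_) ?_
  · simp only [swapHom, RingHom.comp_apply, AdjoinRoot.lift_of, AdjoinRoot.map_of,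
      RingHom.coe_coe, unswapHom_of, KtoR, AdjoinRoot.algebraMap_eq, RingHom.id_apply]
  · exact (congrArg _ (swapHom_uR m s)).trans (unswapHom_root m s)
  · exact (congrArg _ (swapHom_xR m s)).trans ((unswapHom_of m s _).trans (KtoR_xK m s))

/-- The presentation of `𝓡` as `𝓚[u]/⟨u³⟩`. -/
def isAdjoinRootRR : IsAdjoinRoot (RR m s) (X ^ 3 : (KK m s)[X]) :=
  .ofAdjoinRootEquiv <| AlgEquiv.ofAlgHom (unswapHom m s)
    { swapHom m s with commutes' := swapHom_KtoR m s }
    (AlgHom.ext (unswapHom_swapHom m s))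
    (AdjoinRoot.algHom_ext <| (congrArg _ (unswapHom_root m s)).trans (swapHom_uR m s))

lemma isAdjoinRootRR_root : (isAdjoinRootRR m s).root = uR m s :=
  (congrArg _ (AdjoinRoot.isAdjoinRoot_root_eq_root _)).trans (unswapHom_root m s)

lemma algebraMap_xK_add_one : algebraMap (KK m s) (RR m s) (xK m s + 1) = xR m s + 1 := by
  rw [map_add, map_one]
  exact congrArg (· + 1) (KtoR_xK m s)

end Concrete

/-- The value of `V = min{k : u²(x+1)^k ∈ C₅}` for a Type 5 code. -/
theorem stmt15 (m s : ℕ) (hm : 0 < m) (hs : 0 < s)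
    (a t₁ t₂ U : ℕ) (h₁ h₂ : KK m s)
    (ha1 : 1 ≤ a) (ha2 : a ≤ 2 ^ s - 1)
    (hh₁ : h₁ = 0 ∨ IsUnit h₁) (hh₂ : h₂ = 0 ∨ IsUnit h₂)
    (hU0 : h₁ = 0 → U = a)
    (hU1 : h₁ ≠ 0 → U = min a (2 ^ s + t₁ - a))
    (ht₁ : t₁ < U)
    (C : Ideal (RR m s))
    (hC : C = Ideal.span
      {(xR m s + 1) ^ a + uR m s * (xR m s + 1) ^ t₁ * KtoR m s h₁ +
        uR m s ^ 2 * (xR m s + 1) ^ t₂ * KtoR m s h₂})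
    (V : ℕ) (hV : V = sInf {k : ℕ | uR m s ^ 2 * (xR m s + 1) ^ k ∈ C})
    (ht₂ : t₂ < V)
    (α₁ : ℕ)
    (hα₁ : α₁ = sSup {k : ℕ | k ≤ 2 ^ s ∧
      (xK m s + 1) ^ k ∣ (h₁ - h₂ * Ring.inverse h₁)}) :
    (h₁ = 0 → h₂ = 0 → V = a) ∧
    (h₁ = 0 → h₂ ≠ 0 → V = min a (2 ^ s + t₂ - a)) ∧
    (h₁ ≠ 0 → h₂ = 0 → 2 * a ≤ 2 ^ s + t₁ →
      V = min a (2 ^ s + 2 * t₁ - 2 * a)) ∧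
    (h₁ ≠ 0 → h₂ ≠ 0 → 2 * a ≤ 2 ^ s + t₁ → 2 * t₁ ≠ a + t₂ →
      V = min a (min (2 ^ s + t₂ - a) (2 ^ s + 2 * t₁ - 2 * a))) ∧
    (h₁ ≠ 0 → h₂ ≠ 0 → 2 * a ≤ 2 ^ s + t₁ → 2 * t₁ = a + t₂ →
      V = min a (2 ^ s + t₂ + α₁ - a)) ∧
    (h₁ ≠ 0 → h₂ = 0 → 2 ^ s + t₁ ≤ 2 * a → V = t₁) ∧
    (h₁ ≠ 0 → h₂ ≠ 0 → 2 ^ s + t₁ ≤ 2 * a → 2 * t₁ ≠ a + t₂ →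
      V = min t₁ (a + t₂ - t₁)) ∧
    (h₁ ≠ 0 → h₂ ≠ 0 → 2 ^ s + t₁ ≤ 2 * a → 2 * t₁ = a + t₂ →
      V = min (2 ^ s + t₁ - a) (t₁ + α₁)) := by
  simp only [← algebraMap_xK_add_one, ← isAdjoinRootRR_root] at hC hV
  exact stmt15_general (isNilpotentUniformizer_xK_add_one m s) (isAdjoinRootRR m s) a t₁ t₂ h₁ h₂
    (by omega) hh₁ hh₂ C hC V hV α₁ hα₁
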